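/- For all natural numbers n ≥ 1 and real parameters a, b, c, d and real θ (with all denominators nonzero), the (normalized) Wilson polynomials W_n(x²) with x² interpreted formally satisfy x²·W_n(x²) = α_n·W_{n+1}(x²) + β_n·W_n(x²) + γ_n·W_{n-1}(x²), where α_n = −(a+b+c+d+n−1)/((a+b+c+d+2n)(a+b+c+d+2n−1)), γ_n = −(a+b+n−1)(a+c+n−1)(a+d+n−1)(b+c+n−1)(b+d+n−1)(c+d+n−1)·n / ((a+b+c+d+2n−1)(a+b+c+d+2n−2)), and β_n = (4n² − 4(1−a−b−c−d)n + (a+b+c+d)² − 2(a²+b²+c²+d²))/8 + (a+b+c+d−2)(a+b−c−d)(a+c−b−d)(a+d−b−c)/(8(a+b+c+d+2n)(a+b+c+d+2n−2)). -/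

import Mathlib

/-- Rising factorial `(a)_k = a(a+1)⋯(a+k-1)`. -/
noncomputable def rf (a : ℝ) (k : ℕ) : ℝ := ∏ j ∈ Finset.range k, (a + j)

/-- The (normalized) Wilson polynomials evaluated at `x²`:
`W_n(x²) = (a+b)_n (a+c)_n (a+d)_n ∑_{k=0}^n
  ((-n)_k (n+a+b+c+d-1)_k ∏_{j=0}^{k-1}((a+j)²+x²)) / ((a+b)_k (a+c)_k (a+d)_k k!)`,
using `(a+ix)_k (a-ix)_k = ∏_{j=0}^{k-1}((a+j)² + x²)` for real `x`. -/
noncomputable def wilson (a b c d : ℝ) (n : ℕ) (x : ℝ) : ℝ :=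
  rf (a + b) n * rf (a + c) n * rf (a + d) n *
    ∑ k ∈ Finset.range (n + 1),
      rf (-(n : ℝ)) k * rf ((n : ℝ) + a + b + c + d - 1) k *
          (∏ j ∈ Finset.range k, ((a + j) ^ 2 + x ^ 2)) /
        (rf (a + b) k * rf (a + c) k * rf (a + d) k * (k.factorial : ℝ))

theorem rf_zero (a : ℝ) : rf a 0 = 1 := by simp [rf]

theorem rf_succ (a : ℝ) (k : ℕ) : rf a (k + 1) = rf a k * (a + k) :=
  Finset.prod_range_succ _ _

theorem rf_succ_left (a : ℝ) (k : ℕ) : rf a (k + 1) = a * rf (a + 1) k := by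
  unfold rf
  rw [Finset.prod_range_succ']
  push_cast
  simp only [add_zero, add_assoc, add_comm (1 : ℝ)]
  ring

theorem rf_neg_natCast_eq_zero {n k : ℕ} (h : n < k) : rf (-(n : ℝ)) k = 0 :=
  Finset.prod_eq_zero (Finset.mem_range.2 h) (by simp)

/-- The numerator `(-u)_k (u+s-1)_k` of the coefficients of a Wilson polynomial of degree `u`,
with `s` the sum of the four parameters. -/
noncomputable def wilsonNum (s u : ℝ) (k : ℕ) : ℝ := rf (-u) k * rf (u + s - 1) k

/-- The denominator of the coefficients of a Wilson polynomial. -/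
noncomputable def wilsonDen (a b c d : ℝ) (k : ℕ) : ℝ :=
  rf (a + b) k * rf (a + c) k * rf (a + d) k * (k.factorial : ℝ)

/-- The coefficient of the raised neighbour in the recurrence of the Wilson polynomials
normalized to have constant coefficient `1`. -/
noncomputable def wilsonUp (a b c d u : ℝ) : ℝ :=
  (a + b + c + d + u - 1) * (a + b + u) * (a + c + u) * (a + d + u) /
    ((a + b + c + d + 2 * u) * (a + b + c + d + 2 * u - 1))

/-- The coefficient of the lowered neighbour in the recurrence of the Wilson polynomials
normalized to have constant coefficient `1`. -/
noncomputable def wilsonDown (a b c d u : ℝ) : ℝ :=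
  u * (b + c + u - 1) * (b + d + u - 1) * (c + d + u - 1) /
    ((a + b + c + d + 2 * u - 1) * (a + b + c + d + 2 * u - 2))

theorem wilsonNum_succ (s u : ℝ) (k : ℕ) :
    wilsonNum s u (k + 1) = wilsonNum s u k * ((-u + k) * (u + s - 1 + k)) := by
  simp only [wilsonNum, rf_succ]
  ring

theorem wilsonNum_sub_raise (s u : ℝ) (k : ℕ) :
    (u + s - 1) * (wilsonNum s u (k + 1) - wilsonNum s (u + 1) (k + 1)) =
      (s + 2 * u) * ((k + 1) * (u + s - 1 + k) * wilsonNum s u k) := by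
  have h1 : rf (-(u + 1)) (k + 1) = -(u + 1) * rf (-u) k := by
    rw [rf_succ_left, show -(u + 1) + 1 = -u by ring]
  have h2 : (u + s - 1) * rf (u + s) k = rf (u + s - 1) k * (u + s - 1 + k) := by
    rw [← rf_succ, rf_succ_left, sub_add_cancel]
  rw [wilsonNum_succ, wilsonNum, wilsonNum, h1, show u + 1 + s - 1 = u + s by ring, rf_succ]
  linear_combination (u + 1) * rf (-u) k * (u + s + k) * h2

theorem wilsonNum_sub_lower (s u : ℝ) (k : ℕ) :
    u * (wilsonNum s u (k + 1) - wilsonNum s (u - 1) (k + 1)) =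
      (s + 2 * u - 2) * ((k + 1) * (-u + k) * wilsonNum s u k) := by
  have h1 : rf (u - 1 + s - 1) (k + 1) = (u + s - 2) * rf (u + s - 1) k := by
    rw [show u - 1 + s - 1 = u + s - 2 by ring, rf_succ_left,
      show u + s - 2 + 1 = u + s - 1 by ring]
  have h2 : -u * rf (-u + 1) k = rf (-u) k * (-u + k) := by
    rw [← rf_succ, rf_succ_left]
  rw [wilsonNum_succ, wilsonNum, wilsonNum, h1, show -(u - 1) = -u + 1 by ring, rf_succ]
  linear_combination (u + s - 2) * rf (u + s - 1) k * (-u + 1 + k) * h2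

theorem cubic_div_decomposition (α β γ t : ℝ) {y : ℝ} (hy : y ≠ 0) :
    (α + t) * (β + t) * (γ + t) = (α + β + γ - y + t) * (t * (y + t)) +
      (α * β * γ * (y + t) + (y - γ) * (y - β) * (y - α) * t) / y := by
  field_simp
  ring

theorem centered_up_add_down (s p q r : ℝ) {X : ℝ} (h0 : X ≠ 0) (h1 : X - 1 ≠ 0)
    (h2 : X - 2 ≠ 0) :
    (X + s - 2) / 2 * ((X + p) / 2) * ((X + q) / 2) * ((X + r) / 2) / (X * (X - 1)) +
        (X - s) / 2 * ((X - 2 - r) / 2) * ((X - 2 - q) / 2) * ((X - 2 - p) / 2) /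
          ((X - 1) * (X - 2)) - ((s + p + q + r) / 4) ^ 2 =
      (X ^ 2 - 2 * X - (s ^ 2 + p ^ 2 + q ^ 2 + r ^ 2 - 4 * s) / 2) / 8 +
        (s - 2) * p * q * r / (8 * X * (X - 2)) := by
  field_simp
  ring

theorem wilsonNum_recurrence (a b c d u : ℝ) (k : ℕ)
    (h0 : a + b + c + d + 2 * u ≠ 0) (h1 : a + b + c + d + 2 * u - 1 ≠ 0)
    (h2 : a + b + c + d + 2 * u - 2 ≠ 0) :
    wilsonNum (a + b + c + d) u k * ((a + b + k) * (a + c + k) * (a + d + k) * (k + 1)) =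
      (a + (k + 1)) ^ 2 * wilsonNum (a + b + c + d) u (k + 1)
        - wilsonUp a b c d u * wilsonNum (a + b + c + d) (u + 1) (k + 1)
        + (wilsonUp a b c d u + wilsonDown a b c d u - a ^ 2) *
            wilsonNum (a + b + c + d) u (k + 1)
        - wilsonDown a b c d u * wilsonNum (a + b + c + d) (u - 1) (k + 1) := by
  have hup : wilsonUp a b c d u * (wilsonNum (a + b + c + d) u (k + 1) -
      wilsonNum (a + b + c + d) (u + 1) (k + 1)) =
      (a + b + u) * (a + c + u) * (a + d + u) *
        ((k + 1) * (u + (a + b + c + d) - 1 + k) * wilsonNum (a + b + c + d) u k) /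
          (a + b + c + d + 2 * u - 1) := by
    rw [wilsonUp, div_mul_eq_mul_div, div_eq_div_iff (mul_ne_zero h0 h1) h1]
    have h := wilsonNum_sub_raise (a + b + c + d) u k
    generalize a + b + c + d = s at *
    generalize a + b + u = α, a + c + u = β, a + d + u = γ, s + 2 * u - 1 = Y
    linear_combination α * β * γ * Y * h
  have hdown : wilsonDown a b c d u * (wilsonNum (a + b + c + d) u (k + 1) -
      wilsonNum (a + b + c + d) (u - 1) (k + 1)) =
      (b + c + u - 1) * (b + d + u - 1) * (c + d + u - 1) *
        ((k + 1) * (-u + k) * wilsonNum (a + b + c + d) u k) /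
          (a + b + c + d + 2 * u - 1) := by
    rw [wilsonDown, div_mul_eq_mul_div, div_eq_div_iff (mul_ne_zero h1 h2) h1]
    have h := wilsonNum_sub_lower (a + b + c + d) u k
    generalize a + b + c + d = s at *
    generalize b + c + u - 1 = α, b + d + u - 1 = β, c + d + u - 1 = γ, s + 2 * u - 1 = Y
    linear_combination α * β * γ * Y * h
  have hsum : (a + b + k) * (a + c + k) * (a + d + k) =
      (2 * a + k + 1) * ((-u + k) * (u + (a + b + c + d) - 1 + k)) +
        ((a + b + u) * (a + c + u) * (a + d + u) * (u + (a + b + c + d) - 1 + k) +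
          (b + c + u - 1) * (b + d + u - 1) * (c + d + u - 1) * (-u + k)) /
            (a + b + c + d + 2 * u - 1) := by
    have h := cubic_div_decomposition (a + b + u) (a + c + u) (a + d + u) (-u + k) h1
    rw [show a + b + u + (-u + k) = a + b + k by ring,
      show a + c + u + (-u + k) = a + c + k by ring,
      show a + d + u + (-u + k) = a + d + k by ring,
      show a + b + u + (a + c + u) + (a + d + u) - (a + b + c + d + 2 * u - 1) + (-u + k) =
        2 * a + k + 1 by ring,
      show a + b + c + d + 2 * u - 1 + (-u + k) = u + (a + b + c + d) - 1 + k by ring,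
      show a + b + c + d + 2 * u - 1 - (a + d + u) = b + c + u - 1 by ring,
      show a + b + c + d + 2 * u - 1 - (a + c + u) = b + d + u - 1 by ring,
      show a + b + c + d + 2 * u - 1 - (a + b + u) = c + d + u - 1 by ring] at h
    exact h
  have hsucc := wilsonNum_succ (a + b + c + d) u k
  generalize a + b + c + d = s at *
  generalize (a + b + u) * (a + c + u) * (a + d + u) = α,
    (b + c + u - 1) * (b + d + u - 1) * (c + d + u - 1) = β,
    (a + b + k) * (a + c + k) * (a + d + k) = γ, s + 2 * u - 1 = Y at hup hdown hsum ⊢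
  linear_combination wilsonNum s u k * (k + 1) * hsum - hup - hdown -
    (k + 1) * (2 * a + k + 1) * hsucc

theorem wilsonDen_succ (a b c d : ℝ) (k : ℕ) :
    wilsonDen a b c d (k + 1) =
      wilsonDen a b c d k * ((a + b + k) * (a + c + k) * (a + d + k) * (k + 1)) := by
  simp only [wilsonDen, rf_succ, Nat.factorial_succ]
  push_cast
  ring

theorem wilson_eq_sum (a b c d x : ℝ) {n N : ℕ} (h : n ≤ N) :
    wilson a b c d n x = rf (a + b) n * rf (a + c) n * rf (a + d) n *
      (∑ k ∈ Finset.range N, wilsonNum (a + b + c + d) n (k + 1) / wilsonDen a b c d (k + 1) *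
        (∏ j ∈ Finset.range (k + 1), ((a + j) ^ 2 + x ^ 2)) + 1) := by
  have hsub : Finset.range (n + 1) ⊆ Finset.range (N + 1) :=
    Finset.range_subset_range.2 (by omega)
  unfold wilson
  rw [Finset.sum_subset hsub, Finset.sum_range_succ']
  · congr 2
    · refine Finset.sum_congr rfl fun k _ => ?_
      simp only [wilsonNum, wilsonDen, add_assoc]
      ring
    · simp [rf_zero]
  · intro k _ hk
    rw [rf_neg_natCast_eq_zero (by simpa using hk)]
    simp

/-- The three-term recurrence for Wilson polynomials normalized to have constant
coefficient `1`. -/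
theorem wilson_normalized_recurrence (n : ℕ) (a b c d x : ℝ)
    (hD : ∀ k ≤ n + 1, wilsonDen a b c d k ≠ 0)
    (h0 : a + b + c + d + 2 * n ≠ 0) (h1 : a + b + c + d + 2 * n - 1 ≠ 0)
    (h2 : a + b + c + d + 2 * n - 2 ≠ 0) (S : ℝ → ℝ)
    (hS : S = fun u => ∑ k ∈ Finset.range (n + 1),
      wilsonNum (a + b + c + d) u (k + 1) / wilsonDen a b c d (k + 1) *
        (∏ j ∈ Finset.range (k + 1), ((a + j) ^ 2 + x ^ 2)) + 1) :
    x ^ 2 * S n = -wilsonUp a b c d n * S (n + 1) +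
      (wilsonUp a b c d n + wilsonDown a b c d n - a ^ 2) * S n -
        wilsonDown a b c d n * S (n - 1) := by
  set p : ℕ → ℝ := fun k => ∏ j ∈ Finset.range k, ((a + j) ^ 2 + x ^ 2) with hp
  set C : ℝ → ℕ → ℝ := fun u k => wilsonNum (a + b + c + d) u k / wilsonDen a b c d k with hC
  have hSu : ∀ u, S u = ∑ k ∈ Finset.range (n + 1), C u (k + 1) * p (k + 1) + 1 := fun u => by
    rw [hS]
  have hC0 : C n 0 * p 0 = 1 := by simp [hC, hp, wilsonNum, wilsonDen, rf_zero]
  have hlast : C n (n + 1) = 0 := by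
    simp [hC, wilsonNum, rf_neg_natCast_eq_zero (Nat.lt_succ_self n)]
  have hSn : S n = ∑ k ∈ Finset.range (n + 1), C n k * p k := by
    rw [hSu, ← hC0, ← Finset.sum_range_succ' (fun k => C n k * p k),
      Finset.sum_range_succ, hlast, zero_mul, add_zero]
  have hshift : ∑ k ∈ Finset.range (n + 1), C n k * p k * (a + k) ^ 2 =
      ∑ k ∈ Finset.range (n + 1), C n (k + 1) * p (k + 1) * (a + (k + 1)) ^ 2 + a ^ 2 := by
    have h := Finset.sum_range_succ' (fun k : ℕ => C n k * p k * (a + k) ^ 2) (n + 1)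
    rw [Finset.sum_range_succ, hlast, hC0] at h
    push_cast at h
    simpa using h
  have hx : x ^ 2 * S n = ∑ k ∈ Finset.range (n + 1), C n k * p (k + 1) -
      ∑ k ∈ Finset.range (n + 1), C n k * p k * (a + k) ^ 2 := by
    rw [hSn, Finset.mul_sum, ← Finset.sum_sub_distrib]
    refine Finset.sum_congr rfl fun k _ => ?_
    simp only [hp, Finset.prod_range_succ]
    ring
  have hcoeff : ∑ k ∈ Finset.range (n + 1), C n k * p (k + 1) =
      ∑ k ∈ Finset.range (n + 1), C n (k + 1) * p (k + 1) * (a + (k + 1)) ^ 2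
        - wilsonUp a b c d n * ∑ k ∈ Finset.range (n + 1), C (n + 1) (k + 1) * p (k + 1)
        + (wilsonUp a b c d n + wilsonDown a b c d n - a ^ 2) *
            ∑ k ∈ Finset.range (n + 1), C n (k + 1) * p (k + 1)
        - wilsonDown a b c d n *
            ∑ k ∈ Finset.range (n + 1), C (n - 1) (k + 1) * p (k + 1) := by
    simp only [Finset.mul_sum, ← Finset.sum_sub_distrib, ← Finset.sum_add_distrib]
    refine Finset.sum_congr rfl fun k hk => ?_
    have hk : k < n + 1 := Finset.mem_range.1 hk
    have hD1 := hD (k + 1) hk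
    have hCk : C n k = wilsonNum (a + b + c + d) n k *
        ((a + b + k) * (a + c + k) * (a + d + k) * (k + 1)) / wilsonDen a b c d (k + 1) := by
      rw [wilsonDen_succ] at hD1 ⊢
      rw [mul_div_mul_right _ _ (right_ne_zero_of_mul hD1)]
    rw [hCk, wilsonNum_recurrence a b c d n k h0 h1 h2]
    simp only [hC]
    ring
  rw [hx, hshift, hcoeff, hSu n, hSu (n + 1), hSu (n - 1)]
  ring

theorem wilsonUp_add_wilsonDown_sub_sq (a b c d u : ℝ)
    (h0 : a + b + c + d + 2 * u ≠ 0) (h1 : a + b + c + d + 2 * u - 1 ≠ 0)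
    (h2 : a + b + c + d + 2 * u - 2 ≠ 0) :
    wilsonUp a b c d u + wilsonDown a b c d u - a ^ 2 =
      (4 * u ^ 2 - 4 * (1 - a - b - c - d) * u + (a + b + c + d) ^ 2 -
          2 * (a ^ 2 + b ^ 2 + c ^ 2 + d ^ 2)) / 8 +
        (a + b + c + d - 2) * (a + b - c - d) * (a + c - b - d) * (a + d - b - c) /
          (8 * (a + b + c + d + 2 * u) * (a + b + c + d + 2 * u - 2)) := by
  have h := centered_up_add_down (a + b + c + d) (a + b - c - d) (a + c - b - d)
    (a + d - b - c) h0 h1 h2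
  rw [show (a + b + c + d + 2 * u + (a + b + c + d) - 2) / 2 = a + b + c + d + u - 1 by ring,
    show (a + b + c + d + 2 * u + (a + b - c - d)) / 2 = a + b + u by ring,
    show (a + b + c + d + 2 * u + (a + c - b - d)) / 2 = a + c + u by ring,
    show (a + b + c + d + 2 * u + (a + d - b - c)) / 2 = a + d + u by ring,
    show (a + b + c + d + 2 * u - (a + b + c + d)) / 2 = u by ring,
    show (a + b + c + d + 2 * u - 2 - (a + d - b - c)) / 2 = b + c + u - 1 by ring,
    show (a + b + c + d + 2 * u - 2 - (a + c - b - d)) / 2 = b + d + u - 1 by ring,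
    show (a + b + c + d + 2 * u - 2 - (a + b - c - d)) / 2 = c + d + u - 1 by ring,
    show (a + b + c + d + (a + b - c - d) + (a + c - b - d) + (a + d - b - c)) / 4 = a by
      ring] at h
  rw [wilsonUp, wilsonDown, h]
  congr 2
  ring

theorem wilson_three_term (n : ℕ) (hn : 1 ≤ n) (a b c d x : ℝ)
    (hab : ∀ k ≤ n + 1, rf (a + b) k ≠ 0)
    (hac : ∀ k ≤ n + 1, rf (a + c) k ≠ 0)
    (had : ∀ k ≤ n + 1, rf (a + d) k ≠ 0)
    (h0 : a + b + c + d + 2 * n ≠ 0)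
    (h1 : a + b + c + d + 2 * n + 1 ≠ 0)
    (h2 : a + b + c + d + 2 * n - 1 ≠ 0)
    (h3 : a + b + c + d + 2 * n - 2 ≠ 0) :
    x ^ 2 * wilson a b c d n x =
      (-(a + b + c + d + n - 1) / ((a + b + c + d + 2 * n) * (a + b + c + d + 2 * n - 1))) *
          wilson a b c d (n + 1) x +
        ((4 * n ^ 2 - 4 * (1 - a - b - c - d) * n + (a + b + c + d) ^ 2 -
              2 * (a ^ 2 + b ^ 2 + c ^ 2 + d ^ 2)) / 8 +
            (a + b + c + d - 2) * (a + b - c - d) * (a + c - b - d) * (a + d - b - c) /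
              (8 * (a + b + c + d + 2 * n) * (a + b + c + d + 2 * n - 2))) *
          wilson a b c d n x +
        (-(a + b + n - 1) * (a + c + n - 1) * (a + d + n - 1) * (b + c + n - 1) *
              (b + d + n - 1) * (c + d + n - 1) * n /
            ((a + b + c + d + 2 * n - 1) * (a + b + c + d + 2 * n - 2))) *
          wilson a b c d (n - 1) x := by
  have hD : ∀ k ≤ n + 1, wilsonDen a b c d k ≠ 0 := fun k hk =>
    mul_ne_zero (mul_ne_zero (mul_ne_zero (hab k hk) (hac k hk)) (had k hk))
      (Nat.cast_ne_zero.2 k.factorial_ne_zero)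
  have key := wilson_normalized_recurrence n a b c d x hD h0 h2 h3 _ rfl
  rw [← wilsonUp_add_wilsonDown_sub_sq a b c d n h0 h2 h3,
    wilson_eq_sum a b c d x (Nat.le_succ n), wilson_eq_sum a b c d x (le_refl (n + 1)),
    wilson_eq_sum a b c d x (show n - 1 ≤ n + 1 by omega)]
  obtain ⟨m, rfl⟩ : ∃ m, n = m + 1 := ⟨n - 1, by omega⟩
  simp only [Nat.add_sub_cancel, rf_succ]
  push_cast at key ⊢
  rw [add_sub_cancel_right] at key
  rw [mul_left_comm, key]
  simp only [wilsonUp, wilsonDown, ← add_assoc, add_sub_cancel_right]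
  generalize a + b + c + d + 2 * ((m : ℝ) + 1) = X, a + b + c + d + (m : ℝ) = e,
    a + b + (m : ℝ) = e₁, a + c + (m : ℝ) = e₂, a + d + (m : ℝ) = e₃,
    b + c + (m : ℝ) = e₄, b + d + (m : ℝ) = e₅, c + d + (m : ℝ) = e₆
  ring
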